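/- arXiv:1903.03880 — 2 statements merged into one kernel-verified Lean document; each statement's English description precedes it below -/
import Mathlib

section
/- Let n be a finite type and let ρ ∈ Matrix n n ℂ be Hermitian. Then (‖ρ‖₁ + Re(Tr ρ))/2 is the greatest element of the set {r : ℝ | ∃ X ∈ Matrix n n ℂ, X is positive semidefinite, 1 - X is positive semidefinite, and r = Re(Tr(ρ · X))}. In particular, when Tr ρ = 1 the optimal value of the dual semidefinite program sup{ Tr[ρX] - 1 : X ≥ 0, X ≤ I } equals (‖ρ‖₁ - 1)/2, so strong duality holds for the robustness of non-Markovianity. -/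
open Matrix
open scoped ComplexOrder

open scoped MatrixOrder in
/-- The trace norm of a matrix: the trace of the positive semidefinite square root of `AᴴA`. -/
noncomputable def traceNorm {n : Type*} [Fintype n] [DecidableEq n] (A : Matrix n n ℂ) : ℝ :=
  ((CFC.sqrt (Aᴴ * A)).trace).re

open scoped MatrixOrder in
lemma Matrix.PosSemidef.re_trace_mul_nonneg {n : Type*} [Fintype n]
    {A B : Matrix n n ℂ} (hA : A.PosSemidef) (hB : B.PosSemidef) : 0 ≤ ((A * B).trace).re := by
  classical
  obtain ⟨C, rfl⟩ := CStarAlgebra.nonneg_iff_eq_star_mul_self.mp hA.nonneg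
  rw [mul_assoc, trace_mul_comm, star_eq_conjTranspose]
  exact (Complex.nonneg_iff.mp (hB.mul_mul_conjTranspose_same C).trace_nonneg).1

open scoped MatrixOrder in
lemma traceNorm_add_re_trace_div_two {n : Type*} [Fintype n] [DecidableEq n]
    {ρ : Matrix n n ℂ} (hρ : ρ.IsHermitian) :
    (traceNorm ρ + (ρ.trace).re) / 2 = (ρ⁺.trace).re := by
  have habs : traceNorm ρ = ((ρ⁺ + ρ⁻).trace).re := by
    rw [CFC.posPart_add_negPart ρ hρ.isSelfAdjoint]
    rfl
  nth_rw 2 [← CFC.posPart_sub_negPart ρ hρ.isSelfAdjoint]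
  rw [habs, trace_add, trace_sub, Complex.add_re, Complex.sub_re]
  ring

open scoped MatrixOrder in
/-- `ρ⁺` is `ρ` times its spectral projector onto the nonnegative eigenspace. -/
lemma exists_posSemidef_le_one_mul_eq_posPart {n : Type*} [Fintype n] [DecidableEq n]
    {ρ : Matrix n n ℂ} (hρ : ρ.IsHermitian) :
    ∃ X : Matrix n n ℂ, X.PosSemidef ∧ ((1 : Matrix n n ℂ) - X).PosSemidef ∧ ρ * X = ρ⁺ := by
  have hcont (f : ℝ → ℝ) : ContinuousOn f (spectrum ℝ ρ) :=
    (finite_real_spectrum (A := ρ)).continuousOn f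
  let f : ℝ → ℝ := fun x => if 0 ≤ x then 1 else 0
  refine ⟨cfc f ρ, ?_, ?_, ?_⟩
  · rw [← nonneg_iff_posSemidef]
    exact cfc_nonneg fun x _ => by simp only [f]; split_ifs <;> norm_num
  · rw [← nonneg_iff_posSemidef, sub_nonneg]
    exact cfc_le_one _ _ fun x _ => by simp only [f]; split_ifs <;> norm_num
  · nth_rw 1 [← cfc_id' ℝ ρ hρ.isSelfAdjoint]
    rw [← cfc_mul _ _ _ (hcont _) (hcont _), CFC.posPart_def,
      cfcₙ_eq_cfc (hf := continuous_posPart.continuousOn) (hf0 := by simp)]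
    refine cfc_congr fun x _ => ?_
    by_cases hx : 0 ≤ x
    · simp [f, hx]
    · simp [f, hx, (not_le.mp hx).le]

open scoped MatrixOrder in
lemma re_trace_mul_le_re_trace_posPart {n : Type*} [Fintype n] [DecidableEq n]
    {ρ X : Matrix n n ℂ} (hρ : ρ.IsHermitian) (hX : X.PosSemidef)
    (hX' : ((1 : Matrix n n ℂ) - X).PosSemidef) :
    ((ρ * X).trace).re ≤ (ρ⁺.trace).re := by
  have hpos := (nonneg_iff_posSemidef.mp (CFC.posPart_nonneg ρ)).re_trace_mul_nonneg hX'
  have hneg := (nonneg_iff_posSemidef.mp (CFC.negPart_nonneg ρ)).re_trace_mul_nonneg hX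
  nth_rw 1 [← CFC.posPart_sub_negPart ρ hρ.isSelfAdjoint]
  simp only [mul_sub, mul_one, sub_mul, trace_sub, Complex.sub_re] at hpos ⊢
  linarith

/-- The dual semidefinite program `sup { Re Tr[ρX] : 0 ≤ X ≤ I }` attains the value
`(‖ρ‖₁ + Re Tr ρ)/2`; in particular for `Tr ρ = 1` the dual optimal value of
`sup { Tr[ρX] - 1 }` is `(‖ρ‖₁ - 1)/2`, so strong duality holds. -/
theorem dual_sdp_value {n : Type*} [Fintype n] [DecidableEq n]
    (ρ : Matrix n n ℂ) (hρ : ρ.IsHermitian) :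
    IsGreatest {r : ℝ | ∃ X : Matrix n n ℂ, X.PosSemidef ∧
        ((1 : Matrix n n ℂ) - X).PosSemidef ∧ r = ((ρ * X).trace).re}
      ((traceNorm ρ + (ρ.trace).re) / 2) := by
  rw [traceNorm_add_re_trace_div_two hρ]
  constructor
  · obtain ⟨X, hX, hX', h⟩ := exists_posSemidef_le_one_mul_eq_posPart hρ
    exact ⟨X, hX, hX', by rw [h]⟩
  · rintro r ⟨X, hX, hX', rfl⟩
    exact re_trace_mul_le_re_trace_posPart hρ hX hX'
end

section
/- Let n be a nonempty finite type and let ρ ∈ Matrix n n ℂ be Hermitian with Tr ρ = 1. Then there exists a matrix X ∈ Matrix n n ℂ such that X is positive semidefinite, 1 - X is positive semidefinite, Re Tr(ρ · X) = (1 + ‖ρ‖₁)/2, and Re Tr(δ · X) ≤ 1 for every density matrix δ ∈ Matrix n n ℂ. In particular, when ρ is the Choi matrix of a non-Markovian map, X is a witness achieving the discrimination-advantage ratio 1 + N_R(ρ) = (1 + ‖ρ‖₁)/2 against all Markovian Choi matrices δ. -/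
open Matrix
open scoped ComplexOrder

/-- A density matrix: positive semidefinite with unit trace. -/
def IsDensityMatrix {n : Type*} [Fintype n] (ρ : Matrix n n ℂ) : Prop :=
  ρ.PosSemidef ∧ ρ.trace = 1

/-- The matrix with eigenbasis given by the columns of `U` and real eigenvalues `f`. -/
noncomputable def unitaryDiagonal {n : Type*} [Fintype n] [DecidableEq n]
    (U : unitary (Matrix n n ℂ)) (f : n → ℝ) : Matrix n n ℂ :=
  (U : Matrix n n ℂ) * diagonal (fun i => (f i : ℂ)) * (U : Matrix n n ℂ)ᴴ

section unitaryDiagonal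

variable {n : Type*} [Fintype n] [DecidableEq n] (U : unitary (Matrix n n ℂ)) (f g : n → ℝ)

lemma unitaryDiagonal_mul :
    unitaryDiagonal U f * unitaryDiagonal U g = unitaryDiagonal U (f * g) := by
  have hU : (U : Matrix n n ℂ)ᴴ * (U : Matrix n n ℂ) = 1 := Unitary.coe_star_mul_self U
  have hd : diagonal (fun i => ((f * g) i : ℂ)) =
      diagonal (fun i => (f i : ℂ)) * diagonal (fun i => (g i : ℂ)) := by
    simp [diagonal_mul_diagonal]
  simp only [unitaryDiagonal, hd, Matrix.mul_assoc]
  rw [← Matrix.mul_assoc (U : Matrix n n ℂ)ᴴ (U : Matrix n n ℂ), hU, Matrix.one_mul]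

lemma one_sub_unitaryDiagonal :
    1 - unitaryDiagonal U f = unitaryDiagonal U (1 - f) := by
  have hU : (U : Matrix n n ℂ) * (U : Matrix n n ℂ)ᴴ = 1 := Unitary.coe_mul_star_self U
  have hd : diagonal (fun i => ((1 - f) i : ℂ)) =
      (1 : Matrix n n ℂ) - diagonal (fun i => (f i : ℂ)) := by
    rw [← diagonal_one, diagonal_sub]
    simp
  rw [unitaryDiagonal, unitaryDiagonal, hd, Matrix.mul_sub, Matrix.sub_mul, Matrix.mul_one, hU]

lemma trace_unitaryDiagonal :
    (unitaryDiagonal U f).trace = ((∑ i, f i : ℝ) : ℂ) := by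
  have hU : (U : Matrix n n ℂ)ᴴ * (U : Matrix n n ℂ) = 1 := Unitary.coe_star_mul_self U
  rw [unitaryDiagonal, trace_mul_cycle, hU, Matrix.one_mul, trace_diagonal]
  push_cast
  rfl

variable {f} in
lemma posSemidef_unitaryDiagonal (hf : 0 ≤ f) : (unitaryDiagonal U f).PosSemidef :=
  (PosSemidef.diagonal fun i => by simpa using hf i).mul_mul_conjTranspose_same _

end unitaryDiagonal

lemma Matrix.IsHermitian.eq_unitaryDiagonal {n : Type*} [Fintype n] [DecidableEq n]
    {A : Matrix n n ℂ} (hA : A.IsHermitian) :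
    A = unitaryDiagonal hA.eigenvectorUnitary hA.eigenvalues := by
  conv_lhs => rw [hA.spectral_theorem, Unitary.conjStarAlgAut_apply]
  rfl

open scoped MatrixOrder in
/-- The trace norm of a Hermitian matrix is the sum of the absolute values of its eigenvalues. -/
lemma traceNorm_eq_sum_abs_eigenvalues {n : Type*} [Fintype n] [DecidableEq n]
    {A : Matrix n n ℂ} (hA : A.IsHermitian) : traceNorm A = ∑ i, |hA.eigenvalues i| := by
  have hsqrt : CFC.sqrt (Aᴴ * A) =
      unitaryDiagonal hA.eigenvectorUnitary |hA.eigenvalues| := by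
    refine CFC.sqrt_unique ?_ (nonneg_iff_posSemidef.mpr
      (posSemidef_unitaryDiagonal _ (abs_nonneg _)))
    have habs : |hA.eigenvalues| * |hA.eigenvalues| = hA.eigenvalues * hA.eigenvalues :=
      funext fun i => abs_mul_abs_self (hA.eigenvalues i)
    rw [unitaryDiagonal_mul, habs, ← unitaryDiagonal_mul, ← hA.eq_unitaryDiagonal,
      hA.eq]
  rw [traceNorm, hsqrt, trace_unitaryDiagonal, Complex.ofReal_re]
  rfl

open scoped MatrixOrder in
/-- The trace of a product of two positive semidefinite matrices is nonnegative. -/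
lemma Matrix.PosSemidef.trace_mul_nonneg {n : Type*} [Fintype n] [DecidableEq n]
    {A B : Matrix n n ℂ} (hA : A.PosSemidef) (hB : B.PosSemidef) : 0 ≤ (A * B).trace := by
  obtain ⟨C, rfl⟩ := CStarAlgebra.nonneg_iff_eq_star_mul_self.mp hA.nonneg
  rw [star_eq_conjTranspose, Matrix.mul_assoc, trace_mul_comm]
  exact (hB.mul_mul_conjTranspose_same C).trace_nonneg

/-- The converse (witness) half of the state-discrimination interpretation: for any Hermitian
trace-one Choi matrix `ρ`, there is a witness `0 ≤ X ≤ I` achieving `Re Tr[ρX] = (1 + ‖ρ‖₁)/2`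
while `Re Tr[δX] ≤ 1` for every Markovian (density-matrix) Choi matrix `δ`. -/
theorem state_discrimination_witness {n : Type*} [Fintype n] [DecidableEq n] [Nonempty n]
    (ρ : Matrix n n ℂ) (hρ : ρ.IsHermitian) (htr : ρ.trace = 1) :
    ∃ X : Matrix n n ℂ, X.PosSemidef ∧ ((1 : Matrix n n ℂ) - X).PosSemidef ∧
      ((ρ * X).trace).re = (1 + traceNorm ρ) / 2 ∧
      ∀ δ : Matrix n n ℂ, IsDensityMatrix δ → ((δ * X).trace).re ≤ 1 := by
  let U := hρ.eigenvectorUnitary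
  let l := hρ.eigenvalues
  -- `X` is the spectral projection of `ρ` onto its nonnegative eigenvalues.
  let p : n → ℝ := fun i => if 0 ≤ l i then 1 else 0
  have hp0 : 0 ≤ p := fun i => by dsimp only [p]; split_ifs <;> simp
  have hp1 : 0 ≤ 1 - p := fun i => by
    dsimp only [p, Pi.sub_apply]; split_ifs <;> simp
  have hX : (1 - unitaryDiagonal U p).PosSemidef := by
    rw [one_sub_unitaryDiagonal]
    exact posSemidef_unitaryDiagonal U hp1
  refine ⟨unitaryDiagonal U p, posSemidef_unitaryDiagonal U hp0, hX, ?_, fun δ hδ => ?_⟩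
  · have hsum : ∑ i, l i = 1 := by
      have h := htr
      rw [hρ.eq_unitaryDiagonal, trace_unitaryDiagonal] at h
      exact_mod_cast h
    have hρX : ρ * unitaryDiagonal U p = unitaryDiagonal U (l * p) := by
      rw [← unitaryDiagonal_mul, ← hρ.eq_unitaryDiagonal]
    rw [hρX, trace_unitaryDiagonal, Complex.ofReal_re, traceNorm_eq_sum_abs_eigenvalues hρ,
      ← hsum, ← Finset.sum_add_distrib, Finset.sum_div]
    refine Finset.sum_congr rfl fun i _ => ?_
    change l i * (if 0 ≤ l i then 1 else 0) = (l i + |l i|) / 2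
    split_ifs with h
    · rw [abs_of_nonneg h]; ring
    · rw [abs_of_neg (not_le.mp h)]; ring
  · have h := (Complex.le_def.mp (hδ.1.trace_mul_nonneg hX)).1
    rw [Matrix.mul_sub, Matrix.mul_one, trace_sub, hδ.2] at h
    simpa using h
end
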